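/- arXiv:2212.12566 — 2 statements merged into one kernel-verified Lean document; each statement's English description precedes it below -/
import Mathlib

section
/- Let (L, I) be an integral system on a set X. If a function f : X → [0,∞] is the pointwise sum f = Σ_{n=1}^∞ f_n of functions f_n : X → [0,∞], then Ī(f) ≤ Σ_{n=1}^∞ Ī(f_n), where Ī denotes the upper integral associated with (L, I). -/
open Filter Topology

/-- An integral system on a set `X`: a linear lattice `L` of real-valued functions on `X`
(a vector subspace of `ℝ^X` closed under pointwise max and min) together with a
preintegral `I` on it (a positive linear functional that is continuous in the sense that
`I fₙ → 0` whenever `fₙ ∈ L` are nonnegative and decrease pointwise to `0`). -/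
structure IntegralSystem (X : Type*) where
  L : Set (X → ℝ)
  I : (X → ℝ) → ℝ
  zero_mem : (0 : X → ℝ) ∈ L
  add_mem : ∀ ⦃f g : X → ℝ⦄, f ∈ L → g ∈ L → f + g ∈ L
  smul_mem : ∀ (c : ℝ) ⦃f : X → ℝ⦄, f ∈ L → c • f ∈ L
  sup_mem : ∀ ⦃f g : X → ℝ⦄, f ∈ L → g ∈ L → f ⊔ g ∈ L
  inf_mem : ∀ ⦃f g : X → ℝ⦄, f ∈ L → g ∈ L → f ⊓ g ∈ L
  I_add : ∀ ⦃f g : X → ℝ⦄, f ∈ L → g ∈ L → I (f + g) = I f + I g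
  I_smul : ∀ (c : ℝ) ⦃f : X → ℝ⦄, f ∈ L → I (c • f) = c * I f
  I_pos : ∀ ⦃f : X → ℝ⦄, f ∈ L → (∀ x, 0 ≤ f x) → 0 ≤ I f
  I_cont : ∀ f : ℕ → X → ℝ, (∀ n, f n ∈ L) → (∀ n x, 0 ≤ f n x) →
    (∀ n x, f (n + 1) x ≤ f n x) →
    (∀ x, Tendsto (fun n => f n x) atTop (𝓝 0)) →
    Tendsto (fun n => I (f n)) atTop (𝓝 0)

variable {X : Type*}

/-- `f : X → (−∞,∞]` belongs to `L_↑` iff some sequence in `L` increases pointwise to `f`. -/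
def MemLup (S : IntegralSystem X) (f : X → EReal) : Prop :=
  ∃ g : ℕ → X → ℝ, (∀ n, g n ∈ S.L) ∧ (∀ n x, g n x ≤ g (n + 1) x) ∧
    ∀ x, Tendsto (fun n => ((g n x : EReal))) atTop (𝓝 (f x))

/-- For `f ∈ L_↑`, `I_↑ f = lim I (g n)` for any sequence `(g n)` in `L` increasing
pointwise to `f`; the value does not depend on the chosen sequence, so we may define it as
the supremum of all such limits. -/
noncomputable def Iup (S : IntegralSystem X) (f : X → EReal) : EReal :=
  sSup { c : EReal | ∃ g : ℕ → X → ℝ, (∀ n, g n ∈ S.L) ∧ (∀ n x, g n x ≤ g (n + 1) x) ∧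
    (∀ x, Tendsto (fun n => ((g n x : EReal))) atTop (𝓝 (f x))) ∧
    Tendsto (fun n => ((S.I (g n) : EReal))) atTop (𝓝 c) }

/-- `L_↓ = −L_↑`. -/
def MemLdown (S : IntegralSystem X) (f : X → EReal) : Prop :=
  MemLup S (fun x => -(f x))

/-- `I_↓ f = −I_↑(−f)`. -/
noncomputable def Idown (S : IntegralSystem X) (f : X → EReal) : EReal :=
  -(Iup S (fun x => -(f x)))

/-- The upper integral `Ī f = inf { I_↑ g : g ∈ L_↑, f ≤ g }` (with `inf ∅ = ∞`). -/
noncomputable def upperInt (S : IntegralSystem X) (f : X → EReal) : EReal :=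
  sInf (Iup S '' { g | MemLup S g ∧ ∀ x, f x ≤ g x })

/-- The lower integral `I̲ f = sup { I_↓ g : g ∈ L_↓, g ≤ f }` (with `sup ∅ = −∞`). -/
noncomputable def lowerInt (S : IntegralSystem X) (f : X → EReal) : EReal :=
  sSup (Idown S '' { g | MemLdown S g ∧ ∀ x, g x ≤ f x })

/-- `f : X → ℝ` is `I`-integrable iff its lower and upper integrals coincide and are finite. -/
def Integrable1 (S : IntegralSystem X) (f : X → ℝ) : Prop :=
  ∃ c : ℝ, lowerInt S (fun x => ((f x : EReal))) = (c : EReal) ∧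
    upperInt S (fun x => ((f x : EReal))) = (c : EReal)

/-- The Daniell extension `I¹` of `I`: the common value of the lower and upper integrals of
an integrable function. -/
noncomputable def Int1 (S : IntegralSystem X) (f : X → ℝ) : ℝ :=
  (upperInt S (fun x => ((f x : EReal)))).toReal

theorem IntegralSystem.sub_mem' (S : IntegralSystem X) {f g : X → ℝ} (hf : f ∈ S.L) (hg : g ∈ S.L) :
    f - g ∈ S.L := by
  have := S.add_mem hf (S.smul_mem (-1) hg)
  simpa [sub_eq_add_neg] using this

theorem IntegralSystem.I_sub' (S : IntegralSystem X) {f g : X → ℝ} (hf : f ∈ S.L) (hg : g ∈ S.L) :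
    S.I (f - g) = S.I f - S.I g := by
  have := S.I_add (S.sub_mem' hf hg) hg
  rw [sub_add_cancel] at this
  linarith

theorem IntegralSystem.I_mono' (S : IntegralSystem X) {f g : X → ℝ} (hf : f ∈ S.L) (hg : g ∈ S.L)
    (h : ∀ x, f x ≤ g x) : S.I f ≤ S.I g := by
  have h1 := S.I_pos (S.sub_mem' hg hf) (fun x => sub_nonneg.2 (h x))
  rw [S.I_sub' hg hf] at h1
  linarith

theorem IntegralSystem.I_le_of_le_lim (S : IntegralSystem X) {f : X → EReal} {g : ℕ → X → ℝ}
    (hg : ∀ n, g n ∈ S.L) (hm : ∀ n x, g n x ≤ g (n + 1) x)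
    (ht : ∀ x, Tendsto (fun n => ((g n x : EReal))) atTop (𝓝 (f x)))
    {h : X → ℝ} (hh : h ∈ S.L) (hle : ∀ x, (h x : EReal) ≤ f x) {C : ℝ}
    (hC : ∀ n, S.I (g n) ≤ C) : S.I h ≤ C := by
  have hd : ∀ n, (h - g n) ⊔ 0 ∈ S.L := fun n => S.sup_mem (S.sub_mem' hh (hg n)) S.zero_mem
  have key := S.I_cont (fun n => (h - g n) ⊔ 0) hd (fun n x => le_max_right _ _)
    (fun n x => by
      have := hm n x
      simp only [Pi.sup_apply, Pi.sub_apply, Pi.zero_apply]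
      exact max_le_max (by linarith) le_rfl)
    (fun x => by
      rw [Metric.tendsto_atTop']
      intro ε hε
      have h1 : ((h x - ε : ℝ) : EReal) < f x :=
        lt_of_lt_of_le (EReal.coe_lt_coe_iff.2 (by linarith)) (hle x)
      obtain ⟨N, hN⟩ := eventually_atTop.1 ((ht x).eventually (lt_mem_nhds h1))
      refine ⟨N, fun n hn => ?_⟩
      have h2 := EReal.coe_lt_coe_iff.1 (hN n hn.le)
      simp only [Pi.sup_apply, Pi.sub_apply, Pi.zero_apply, Real.dist_eq, sub_zero]
      rw [abs_of_nonneg (le_max_right _ _)]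
      exact max_lt (by linarith) hε)
  have h3 : ∀ n, S.I h - C ≤ S.I ((h - g n) ⊔ 0) := fun n => by
    have h4 := S.I_mono' (S.sub_mem' hh (hg n)) (hd n) (fun x => le_max_left _ _)
    rw [S.I_sub' hh (hg n)] at h4
    have := hC n
    linarith
  have := ge_of_tendsto' key h3
  linarith

theorem Iup_le_of_seq (S : IntegralSystem X) {f : X → EReal} {g : ℕ → X → ℝ}
    (hg : ∀ n, g n ∈ S.L) (hm : ∀ n x, g n x ≤ g (n + 1) x)
    (ht : ∀ x, Tendsto (fun n => ((g n x : EReal))) atTop (𝓝 (f x)))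
    {C : ℝ} (hC : ∀ n, S.I (g n) ≤ C) : Iup S f ≤ C := by
  refine sSup_le ?_
  rintro c ⟨k, hk, hkm, hkt, hkc⟩
  refine le_of_tendsto' hkc (fun n => EReal.coe_le_coe_iff.2 ?_)
  refine S.I_le_of_le_lim hg hm ht (hk n) (fun x => ?_) hC
  have : Monotone (fun n => (k n x : EReal)) :=
    monotone_nat_of_le_succ (fun n => EReal.coe_le_coe_iff.2 (hkm n x))
  exact this.ge_of_tendsto (hkt x) n

theorem I_le_Iup (S : IntegralSystem X) {f : X → EReal} {g : ℕ → X → ℝ}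
    (hg : ∀ n, g n ∈ S.L) (hm : ∀ n x, g n x ≤ g (n + 1) x)
    (ht : ∀ x, Tendsto (fun n => ((g n x : EReal))) atTop (𝓝 (f x))) (n : ℕ) :
    (S.I (g n) : EReal) ≤ Iup S f := by
  have hmono : Monotone (fun n => (S.I (g n) : EReal)) :=
    monotone_nat_of_le_succ (fun n => EReal.coe_le_coe_iff.2
      (S.I_mono' (hg n) (hg (n+1)) (hm n)))
  exact (le_iSup (fun n => (S.I (g n) : EReal)) n).trans
    (le_sSup ⟨g, hg, hm, ht, tendsto_atTop_iSup hmono⟩)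

theorem MemLup.exists_nonneg {S : IntegralSystem X} {f : X → EReal} (hf : MemLup S f)
    (h0 : ∀ x, 0 ≤ f x) : ∃ g : ℕ → X → ℝ, (∀ n, g n ∈ S.L) ∧ (∀ n x, g n x ≤ g (n + 1) x) ∧
    (∀ x, Tendsto (fun n => ((g n x : EReal))) atTop (𝓝 (f x))) ∧ ∀ n x, 0 ≤ g n x := by
  obtain ⟨g, hg, hm, ht⟩ := hf
  refine ⟨fun n => g n ⊔ 0, fun n => S.sup_mem (hg n) S.zero_mem,
    fun n x => max_le_max (hm n x) le_rfl, fun x => ?_, fun n x => le_max_right _ _⟩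
  have := (ht x).max (tendsto_const_nhds (x := (0 : EReal)))
  rw [max_eq_left (h0 x)] at this
  refine this.congr (fun n => ?_)
  simp only [Pi.sup_apply, Pi.zero_apply]
  exact ((EReal.coe_strictMono.monotone).map_max (a := g n x) (b := 0)).symm

theorem upperInt_nonneg (S : IntegralSystem X) {f : X → EReal} (h0 : ∀ x, 0 ≤ f x) :
    0 ≤ upperInt S f := by
  refine le_sInf ?_
  rintro _ ⟨g, ⟨hg, hfg⟩, rfl⟩
  obtain ⟨k, hk, hm, ht, hp⟩ := hg.exists_nonneg (fun x => (h0 x).trans (hfg x))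
  refine le_trans ?_ (I_le_Iup S hk hm ht 0)
  exact_mod_cast S.I_pos (hk 0) (hp 0)

theorem IntegralSystem.sum_mem' (S : IntegralSystem X) (G : ℕ → X → ℝ) (hG : ∀ n, G n ∈ S.L)
    (N : ℕ) : (∑ n ∈ Finset.range N, G n) ∈ S.L ∧
      S.I (∑ n ∈ Finset.range N, G n) = ∑ n ∈ Finset.range N, S.I (G n) := by
  induction N with
  | zero =>
    refine ⟨by simpa using S.zero_mem, ?_⟩
    have := S.I_smul 0 S.zero_mem
    simpa using this
  | succ N ih =>
    rw [Finset.sum_range_succ, Finset.sum_range_succ]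
    exact ⟨S.add_mem ih.1 (hG N), by rw [S.I_add ih.1 (hG N), ih.2]⟩

theorem ereal_tendsto_sum (a : ℕ → ℕ → ℝ) (b : ℕ → EReal) (hb : ∀ n, 0 ≤ b n)
    (h : ∀ n, Tendsto (fun k => (a n k : EReal)) atTop (𝓝 (b n))) (N : ℕ) :
    Tendsto (fun k => ((∑ n ∈ Finset.range N, a n k : ℝ) : EReal)) atTop
      (𝓝 (∑ n ∈ Finset.range N, b n)) := by
  induction N with
  | zero => simp
  | succ N ih =>
    simp only [Finset.sum_range_succ, EReal.coe_add]
    have h1 : ∑ n ∈ Finset.range N, b n ≠ ⊥ :=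
      ne_bot_of_le_ne_bot (by simp) (Finset.sum_nonneg fun n _ => hb n)
    have h2 : b N ≠ ⊥ := ne_bot_of_le_ne_bot (by simp) (hb N)
    exact (EReal.continuousAt_add (p := (_, _)) (Or.inr h2) (Or.inl h1)).tendsto.comp
      (ih.prodMk_nhds (h N))

/-- Subadditivity of the upper integral: if `f : X → [0,∞]` is the pointwise sum of the
series of nonnegative functions `fn n : X → [0,∞]`, then `Ī f ≤ Σ_n Ī (fn n)` (sums of
nonnegative series taken in `[0,∞]` as suprema of partial sums). -/
theorem upperInt_subadditive (S : IntegralSystem X) (f : X → EReal) (fn : ℕ → X → EReal)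
    (hpos : ∀ n x, 0 ≤ fn n x)
    (hsum : ∀ x, f x = ⨆ N : ℕ, ∑ n ∈ Finset.range N, fn n x) :
    upperInt S f ≤ ⨆ N : ℕ, ∑ n ∈ Finset.range N, upperInt S (fn n) := by
  have hU : ∀ n, 0 ≤ upperInt S (fn n) := fun n => upperInt_nonneg S (hpos n)
  generalize hB : (⨆ N : ℕ, ∑ n ∈ Finset.range N, upperInt S (fn n)) = B
  have hle : ∀ N, ∑ n ∈ Finset.range N, upperInt S (fn n) ≤ B := fun N =>
    hB ▸ le_iSup (fun N => ∑ n ∈ Finset.range N, upperInt S (fn n)) N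
  have hB0 : 0 ≤ B := by simpa using hle 0
  rcases eq_or_ne B ⊤ with rfl | hBt
  · exact le_top
  lift B to ℝ using ⟨hBt, ne_bot_of_le_ne_bot (by simp) hB0⟩
  have hUt : ∀ n, upperInt S (fn n) ≠ ⊤ := fun n => by
    refine ne_top_of_le_ne_top hBt (le_trans ?_ (hle (n + 1)))
    exact Finset.single_le_sum (f := fun n => upperInt S (fn n)) (fun i _ => hU i)
      (Finset.mem_range.2 (Nat.lt_succ_self n))
  have hex : ∀ n, ∃ u : ℝ, upperInt S (fn n) = u := fun n =>
    ⟨_, (EReal.coe_toReal (hUt n) (ne_bot_of_le_ne_bot (by simp) (hU n))).symm⟩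
  choose u hu using hex
  have hle' : ∀ N, ∑ n ∈ Finset.range N, u n ≤ B := fun N => by
    have := hle N
    simp only [hu] at this
    have e : ∑ n ∈ Finset.range N, (u n : EReal) = ((∑ n ∈ Finset.range N, u n : ℝ) : EReal) := by
      induction N with
      | zero => simp
      | succ N ih => rw [Finset.sum_range_succ, Finset.sum_range_succ, EReal.coe_add, ih (by simpa [hu] using hle N)]
    rw [e] at this
    exact EReal.coe_le_coe_iff.1 this
  suffices hε : ∀ ε : ℝ, 0 < ε → upperInt S f ≤ ((B + ε : ℝ) : EReal) by
    refine le_of_forall_gt_imp_ge_of_dense (fun c hc => ?_)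
    obtain ⟨r, hr1, hr2⟩ := EReal.lt_iff_exists_real_btwn.1 hc
    have := hε (r - B) (sub_pos.2 (EReal.coe_lt_coe_iff.1 hr1))
    rw [add_sub_cancel] at this
    exact this.trans hr2.le
  intro ε hε
  have hg : ∀ n, ∃ g, (MemLup S g ∧ ∀ x, fn n x ≤ g x) ∧
      Iup S g ≤ ((u n + ε / 2 / 2 ^ n : ℝ) : EReal) := fun n => by
    have h1 : upperInt S (fn n) < ((u n + ε / 2 / 2 ^ n : ℝ) : EReal) := by
      rw [hu n, EReal.coe_lt_coe_iff]
      have : 0 < ε / 2 / 2 ^ n := by positivity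
      linarith
    obtain ⟨_, ⟨g, hg, rfl⟩, hlt⟩ := sInf_lt_iff.1 h1
    exact ⟨g, hg, hlt.le⟩
  choose g hg hgI using hg
  have hg0 : ∀ n x, 0 ≤ g n x := fun n x => (hpos n x).trans ((hg n).2 x)
  choose G hGL hGm hGt hG0 using fun n => (hg n).1.exists_nonneg (hg0 n)
  have hGI : ∀ n k, S.I (G n k) ≤ u n + ε / 2 / 2 ^ n := fun n k =>
    EReal.coe_le_coe_iff.1 ((I_le_Iup S (hGL n) (hGm n) (hGt n) k).trans (hgI n))
  let H : ℕ → X → ℝ := fun k => ∑ n ∈ Finset.range k, G n k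
  have hHL : ∀ k, H k ∈ S.L := fun k => (S.sum_mem' (fun n => G n k) (fun n => hGL n k) k).1
  have hHm : ∀ k x, H k x ≤ H (k + 1) x := fun k x => by
    simp only [H, Finset.sum_apply]
    rw [Finset.sum_range_succ]
    have := Finset.sum_le_sum (s := Finset.range k) (fun n _ => hGm n k x)
    have := hG0 k (k + 1) x
    linarith
  have hHmono : ∀ x, Monotone (fun k => (H k x : EReal)) := fun x =>
    monotone_nat_of_le_succ (fun k => EReal.coe_le_coe_iff.2 (hHm k x))
  have hHt : ∀ x, Tendsto (fun k => (H k x : EReal)) atTop (𝓝 (⨆ k, (H k x : EReal))) :=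
    fun x => tendsto_atTop_iSup (hHmono x)
  have hHI : ∀ k, S.I (H k) ≤ B + ε := fun k => by
    rw [(S.sum_mem' (fun n => G n k) (fun n => hGL n k) k).2]
    have h1 := Finset.sum_le_sum (s := Finset.range k) (fun n _ => hGI n k)
    rw [Finset.sum_add_distrib] at h1
    have h2 : ∑ n ∈ Finset.range k, ε / 2 / 2 ^ n ≤ ε := by
      have h3 := (hasSum_geometric_two' ε).summable.sum_le_tsum (Finset.range k)
        (fun n _ => by positivity)
      rwa [tsum_geometric_two' ε] at h3
    have := hle' k
    linarith
  refine le_trans (sInf_le ⟨fun x => ⨆ k, (H k x : EReal), ⟨⟨H, hHL, hHm, hHt⟩, fun x => ?_⟩, rfl⟩)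
    (Iup_le_of_seq S hHL hHm hHt hHI)
  rw [hsum x]
  refine iSup_le (fun N => ?_)
  refine (Finset.sum_le_sum (fun n _ => (hg n).2 x)).trans ?_
  refine le_of_tendsto (ereal_tendsto_sum (fun n k => G n k x) (fun n => g n x)
    (fun n => hg0 n x) (fun n => hGt n x) N) ?_
  filter_upwards [eventually_ge_atTop N] with k hk
  refine le_trans (EReal.coe_le_coe_iff.2 ?_) (le_iSup (fun k => (H k x : EReal)) k)
  simp only [H, Finset.sum_apply]
  exact Finset.sum_le_sum_of_subset_of_nonneg (Finset.range_mono hk) (fun n _ _ => hG0 n k x)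
end

section
/- (Maximality of the Daniell extension.) Let (L, I) be an integral system on a set X. Then (L¹, I¹) is again an integral system on X, and its upper and lower integrals coincide with those of (L, I): for every function f : X → [−∞,∞], the upper integral of f computed from (L¹, I¹) equals the upper integral of f computed from (L, I), and likewise for lower integrals. Consequently, a function f : X → ℝ is I¹-integrable if and only if it is I-integrable, with the same integral; that is, the Daniell extension of (L¹, I¹) is (L¹, I¹) itself. -/
open Filter Topology

variable {X : Type*}

namespace DaniellAux

/-- Elementary upper bound for the upper integral of an extended-valued function. -/
def UB (S : IntegralSystem X) (f : X → EReal) (c : ℝ) : Prop :=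
  ∃ g : ℕ → X → ℝ, (∀ n, g n ∈ S.L) ∧ Monotone g ∧ (∀ n, S.I (g n) ≤ c) ∧
    ∀ x (a : ℝ), (a : EReal) < f x → ∃ n, a < g n x

/-- The same for real functions. -/
def UR (S : IntegralSystem X) (f : X → ℝ) (c : ℝ) : Prop :=
  ∃ g : ℕ → X → ℝ, (∀ n, g n ∈ S.L) ∧ Monotone g ∧ (∀ n, S.I (g n) ≤ c) ∧
    ∀ x (a : ℝ), a < f x → ∃ n, a < g n x

theorem UB_coe (S : IntegralSystem X) (f : X → ℝ) (c : ℝ) :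
    UB S (fun x => (f x : EReal)) c ↔ UR S f c := by
  simp only [UB, UR, EReal.coe_lt_coe_iff]

theorem neg_mem (S : IntegralSystem X) {f : X → ℝ} (hf : f ∈ S.L) : -f ∈ S.L := by
  have := S.smul_mem (-1) hf
  simpa using this

theorem I_neg (S : IntegralSystem X) {f : X → ℝ} (hf : f ∈ S.L) : S.I (-f) = - S.I f := by
  have := S.I_smul (-1) hf
  simpa using this

theorem sub_mem (S : IntegralSystem X) {f g : X → ℝ} (hf : f ∈ S.L) (hg : g ∈ S.L) :
    f - g ∈ S.L := by
  rw [sub_eq_add_neg]; exact S.add_mem hf (neg_mem S hg)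

theorem I_sub (S : IntegralSystem X) {f g : X → ℝ} (hf : f ∈ S.L) (hg : g ∈ S.L) :
    S.I (f - g) = S.I f - S.I g := by
  rw [sub_eq_add_neg, S.I_add hf (neg_mem S hg), I_neg S hg, sub_eq_add_neg]

theorem I_zero (S : IntegralSystem X) : S.I 0 = 0 := by
  have := S.I_smul 0 S.zero_mem
  simpa using this

theorem I_mono (S : IntegralSystem X) {f g : X → ℝ} (hf : f ∈ S.L) (hg : g ∈ S.L)
    (h : f ≤ g) : S.I f ≤ S.I g := by
  have := S.I_pos (sub_mem S hg hf) (fun x => sub_nonneg.2 (h x))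
  rw [I_sub S hg hf] at this
  linarith

theorem compare (S : IntegralSystem X) {h : X → ℝ} (hh : h ∈ S.L) {g : ℕ → X → ℝ}
    (hg : ∀ n, g n ∈ S.L) (hm : Monotone g) {c : ℝ} (hc : ∀ n, S.I (g n) ≤ c)
    (hd : ∀ x (a : ℝ), a < h x → ∃ n, a < g n x) : S.I h ≤ c := by
  have hmem : ∀ n, (h - g n) ⊔ 0 ∈ S.L := fun n => S.sup_mem (sub_mem S hh (hg n)) S.zero_mem
  have key := S.I_cont (fun n => (h - g n) ⊔ 0) hmem
    (fun n x => by simp) (fun n x => by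
      have := hm (Nat.le_succ n) x
      simp only [Pi.sup_apply, Pi.sub_apply, Pi.zero_apply]
      exact sup_le_sup_right (sub_le_sub_left this _) _)
    (fun x => by
      rw [Metric.tendsto_atTop]
      intro ε hε
      obtain ⟨N, hN⟩ := hd x (h x - ε) (by linarith)
      refine ⟨N, fun n hn => ?_⟩
      have h1 := hm hn x
      simp only [Pi.sup_apply, Pi.sub_apply, Pi.zero_apply, Real.dist_eq, sub_zero]
      rw [abs_of_nonneg (le_max_right _ _)]
      exact max_lt (by linarith) hε)
  have : Tendsto (fun n => S.I ((h - g n) ⊔ 0) + c) atTop (𝓝 (0 + c)) := key.add_const c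
  rw [zero_add] at this
  refine ge_of_tendsto' this (fun n => ?_)
  have h1 := I_mono S (sub_mem S hh (hg n)) (hmem n) le_sup_left
  rw [I_sub S hh (hg n)] at h1
  linarith [hc n]

theorem UR.mono {S : IntegralSystem X} {f f' : X → ℝ} {c c' : ℝ} (h : UR S f c)
    (hf : ∀ x, f' x ≤ f x) (hc : c ≤ c') : UR S f' c' := by
  obtain ⟨g, h1, h2, h3, h4⟩ := h
  exact ⟨g, h1, h2, fun n => (h3 n).trans hc, fun x a ha => h4 x a (ha.trans_le (hf x))⟩

theorem UR.add {S : IntegralSystem X} {f f' : X → ℝ} {c c' : ℝ} (h : UR S f c)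
    (h' : UR S f' c') : UR S (f + f') (c + c') := by
  obtain ⟨g, h1, h2, h3, h4⟩ := h
  obtain ⟨g', h1', h2', h3', h4'⟩ := h'
  refine ⟨fun n => g n + g' n, fun n => S.add_mem (h1 n) (h1' n),
    fun m n hmn => add_le_add (h2 hmn) (h2' hmn), fun n => ?_, fun x a ha => ?_⟩
  · rw [S.I_add (h1 n) (h1' n)]; exact add_le_add (h3 n) (h3' n)
  · simp only [Pi.add_apply] at ha ⊢
    obtain ⟨n, hn⟩ := h4 x (f x - (f x + f' x - a) / 2) (by linarith)
    obtain ⟨m, hm⟩ := h4' x (f' x - (f x + f' x - a) / 2) (by linarith)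
    refine ⟨max n m, ?_⟩
    have e1 := h2 (le_max_left n m) x
    have e2 := h2' (le_max_right n m) x
    linarith

theorem UR.smul {S : IntegralSystem X} {f : X → ℝ} {c : ℝ} (h : UR S f c) {r : ℝ}
    (hr : 0 < r) : UR S (r • f) (r * c) := by
  obtain ⟨g, h1, h2, h3, h4⟩ := h
  refine ⟨fun n => r • g n, fun n => S.smul_mem r (h1 n),
    fun m n hmn x => mul_le_mul_of_nonneg_left (h2 hmn x) hr.le, fun n => ?_, fun x a ha => ?_⟩
  · rw [S.I_smul r (h1 n)]; exact mul_le_mul_of_nonneg_left (h3 n) hr.le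
  · simp only [Pi.smul_apply, smul_eq_mul] at ha ⊢
    obtain ⟨n, hn⟩ := h4 x (a / r) (by rw [div_lt_iff₀ hr]; linarith)
    rw [div_lt_iff₀ hr] at hn
    exact ⟨n, by linarith⟩

theorem UR_mem {S : IntegralSystem X} {f : X → ℝ} (h : f ∈ S.L) : UR S f (S.I f) :=
  ⟨fun _ => f, fun _ => h, monotone_const, fun _ => le_rfl, fun _ _ ha => ⟨0, ha⟩⟩

theorem UR.pos {S : IntegralSystem X} {f : X → ℝ} {c : ℝ} (h : UR S f c)
    (hf : ∀ x, 0 ≤ f x) : 0 ≤ c := by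
  obtain ⟨g, h1, h2, h3, h4⟩ := h
  have := compare S S.zero_mem h1 h2 h3 (fun x a ha => h4 x a (ha.trans_le (hf x)))
  rwa [I_zero] at this

theorem UR.add_neg {S : IntegralSystem X} {f : X → ℝ} {c d : ℝ} (h : UR S f c)
    (h' : UR S (-f) d) : 0 ≤ c + d :=
  (h.add h').pos (fun x => by simp)

theorem UR.nonneg_seq {S : IntegralSystem X} {f : X → ℝ} {c : ℝ} (h : UR S f c)
    (hf : ∀ x, 0 ≤ f x) : ∃ g : ℕ → X → ℝ, (∀ n, g n ∈ S.L) ∧ Monotone g ∧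
      (∀ n, S.I (g n) ≤ c) ∧ (∀ x (a : ℝ), a < f x → ∃ n, a < g n x) ∧ ∀ n, 0 ≤ g n := by
  obtain ⟨g, h1, h2, h3, h4⟩ := h
  have hm : ∀ n, g n ⊔ 0 ∈ S.L := fun n => S.sup_mem (h1 n) S.zero_mem
  refine ⟨fun n => g n ⊔ 0, hm, fun m n hmn => sup_le_sup_right (h2 hmn) _, fun n => ?_,
    fun x a ha => ?_, fun n => le_sup_right⟩
  · refine compare S (hm n) h1 h2 h3 (fun x a ha => ?_)
    rcases lt_sup_iff.1 ha with h | h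
    · exact ⟨n, h⟩
    · exact h4 x a (lt_of_lt_of_le h (hf x))
  · obtain ⟨n, hn⟩ := h4 x a ha
    exact ⟨n, lt_sup_iff.2 (Or.inl hn)⟩

/-- `f` is integrable with integral `c`. -/
def HasInt (S : IntegralSystem X) (f : X → ℝ) (c : ℝ) : Prop :=
  ∀ ε > 0, UR S f (c + ε) ∧ UR S (-f) (-c + ε)

theorem HasInt.neg {S : IntegralSystem X} {f : X → ℝ} {c : ℝ} (h : HasInt S f c) :
    HasInt S (-f) (-c) := fun ε hε => ⟨(h ε hε).2, by simpa using (h ε hε).1⟩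

theorem HasInt.add {S : IntegralSystem X} {f g : X → ℝ} {c d : ℝ} (h : HasInt S f c)
    (h' : HasInt S g d) : HasInt S (f + g) (c + d) := by
  intro ε hε
  obtain ⟨a1, a2⟩ := h (ε / 2) (by positivity)
  obtain ⟨b1, b2⟩ := h' (ε / 2) (by positivity)
  refine ⟨(a1.add b1).mono (fun _ => le_rfl) (by linarith),
    (a2.add b2).mono (fun x => ?_) (by linarith)⟩
  simp only [Pi.neg_apply, Pi.add_apply]
  linarith

theorem HasInt_mem {S : IntegralSystem X} {f : X → ℝ} (h : f ∈ S.L) : HasInt S f (S.I f) := by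
  intro ε hε
  refine ⟨(UR_mem h).mono (fun _ => le_rfl) (by linarith),
    (UR_mem (neg_mem S h)).mono (fun _ => le_rfl) ?_⟩
  rw [I_neg S h]; linarith

theorem HasInt.smul_pos {S : IntegralSystem X} {f : X → ℝ} {c : ℝ} (h : HasInt S f c) {r : ℝ}
    (hr : 0 < r) : HasInt S (r • f) (r * c) := by
  intro ε hε
  obtain ⟨a1, a2⟩ := h (ε / r) (by positivity)
  have e : r * (ε / r) = ε := by field_simp
  refine ⟨(a1.smul hr).mono (fun _ => le_rfl) (by rw [mul_add, e]),
    (a2.smul hr).mono (fun x => ?_) (by rw [mul_add, e]; linarith)⟩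
  simp

theorem HasInt.smul {S : IntegralSystem X} {f : X → ℝ} {c : ℝ} (h : HasInt S f c) (r : ℝ) :
    HasInt S (r • f) (r * c) := by
  rcases lt_trichotomy r 0 with hr | hr | hr
  · have := (h.smul_pos (neg_pos.2 hr)).neg
    simpa using this
  · subst hr
    have := HasInt_mem S.zero_mem
    rw [I_zero] at this
    simpa using this
  · exact h.smul_pos hr

theorem HasInt.le_of_UR {S : IntegralSystem X} {f : X → ℝ} {c d : ℝ} (h : HasInt S f c)
    (h' : UR S f d) : c ≤ d := by
  refine le_of_forall_pos_le_add (fun ε hε => ?_)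
  have := h'.add_neg (h ε hε).2
  linarith

theorem HasInt.unique {S : IntegralSystem X} {f : X → ℝ} {c d : ℝ} (h : HasInt S f c)
    (h' : HasInt S f d) : c = d := by
  apply le_antisymm
  · exact le_of_forall_pos_le_add (fun ε hε => h.le_of_UR (h' ε hε).1)
  · exact le_of_forall_pos_le_add (fun ε hε => h'.le_of_UR (h ε hε).1)

theorem HasInt.pos {S : IntegralSystem X} {f : X → ℝ} {c : ℝ} (h : HasInt S f c)
    (hf : ∀ x, 0 ≤ f x) : 0 ≤ c :=
  le_of_forall_pos_le_add (fun ε hε => (h ε hε).1.pos hf)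

theorem exists_HasInt {S : IntegralSystem X} {f : X → ℝ}
    (h : ∀ ε > 0, ∃ c d, UR S f c ∧ UR S (-f) d ∧ c + d < ε) : ∃ c, HasInt S f c := by
  have hb : BddBelow {c | UR S f c} := by
    obtain ⟨c, d, _, h2, _⟩ := h 1 one_pos
    refine ⟨-d, fun z hz => ?_⟩
    have := UR.add_neg hz h2
    linarith
  refine ⟨sInf {c | UR S f c}, fun ε hε => ?_⟩
  obtain ⟨c, d, h1, h2, h3⟩ := h ε hε
  have a1 : sInf {c | UR S f c} ≤ c := csInf_le hb h1
  have a2 : -d ≤ sInf {c | UR S f c} := by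
    refine le_csInf ⟨c, h1⟩ (fun z hz => ?_)
    have := UR.add_neg hz h2
    linarith
  exact ⟨h1.mono (fun _ => le_rfl) (by linarith), h2.mono (fun _ => le_rfl) (by linarith)⟩

theorem HasInt.posPart {S : IntegralSystem X} {f : X → ℝ} {c : ℝ} (h : HasInt S f c) :
    ∃ d, HasInt S (f ⊔ 0) d := by
  apply exists_HasInt
  intro ε hε
  obtain ⟨⟨u, u1, u2, u3, u4⟩, v, v1, v2, v3, v4⟩ := h (ε / 3) (by positivity)
  have um : ∀ n, u n ⊔ 0 ∈ S.L := fun n => S.sup_mem (u1 n) S.zero_mem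
  have vm : ∀ n, v n ⊓ 0 ∈ S.L := fun n => S.inf_mem (v1 n) S.zero_mem
  have umono : Monotone (fun n => u n ⊔ 0) := fun m n hmn => sup_le_sup_right (u2 hmn) _
  have vmono : Monotone (fun n => v n ⊓ 0) := fun m n hmn => inf_le_inf_right _ (v2 hmn)
  have diag : ∀ n, S.I (u n ⊔ 0) + S.I (v n ⊓ 0) ≤ 2 * (ε / 3) := by
    intro n
    rw [← S.I_add (um n) (vm n)]
    refine compare S (S.add_mem (um n) (vm n)) (g := fun n => u n + v n)
      (fun n => S.add_mem (u1 n) (v1 n)) (fun m n hmn => add_le_add (u2 hmn) (v2 hmn))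
      (fun n => ?_) (fun x a ha => ?_)
    · rw [S.I_add (u1 n) (v1 n)]; linarith [u3 n, v3 n]
    · simp only [Pi.add_apply, Pi.sup_apply, Pi.inf_apply, Pi.zero_apply] at ha ⊢
      by_cases h0 : a < 0
      · obtain ⟨p, hp⟩ := u4 x (f x + a / 2) (by linarith)
        obtain ⟨q, hq⟩ := v4 x (-f x + a / 2) (by simp only [Pi.neg_apply]; linarith)
        refine ⟨max p q, ?_⟩
        have e1 := u2 (le_max_left p q) x
        have e2 := v2 (le_max_right p q) x
        linarith
      · refine ⟨n, ?_⟩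
        push Not at h0
        have hi1 := min_le_left (v n x) 0
        have hi2 := min_le_right (v n x) 0
        rcases max_cases (u n x) 0 with ⟨e, _⟩ | ⟨e, _⟩ <;> rw [e] at ha <;> linarith
  have cross : ∀ m n, S.I (u m ⊔ 0) + S.I (v n ⊓ 0) ≤ 2 * (ε / 3) := by
    intro m n
    have e1 := I_mono S (um m) (um _) (umono (le_max_left m n))
    have e2 := I_mono S (vm n) (vm _) (vmono (le_max_right m n))
    linarith [diag (max m n)]
  have bdd : BddAbove (Set.range fun n => S.I (u n ⊔ 0)) := by
    refine ⟨2 * (ε / 3) - S.I (v 0 ⊓ 0), ?_⟩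
    rintro _ ⟨n, rfl⟩
    have := cross n 0
    simp only
    linarith
  refine ⟨⨆ n, S.I (u n ⊔ 0), 2 * (ε / 3) - ⨆ n, S.I (u n ⊔ 0),
    ⟨fun n => u n ⊔ 0, um, umono, fun n => le_ciSup bdd n, ?_⟩,
    ⟨fun n => v n ⊓ 0, vm, vmono, fun n => ?_, ?_⟩, by linarith⟩
  · intro x a ha
    rcases lt_sup_iff.1 ha with h | h
    · obtain ⟨n, hn⟩ := u4 x a h
      exact ⟨n, lt_sup_iff.2 (Or.inl hn)⟩
    · exact ⟨0, lt_sup_iff.2 (Or.inr h)⟩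
  · have : (⨆ n, S.I (u n ⊔ 0)) ≤ 2 * (ε / 3) - S.I (v n ⊓ 0) :=
      ciSup_le (fun m => by linarith [cross m n])
    linarith
  · intro x a ha
    simp only [Pi.neg_apply, Pi.sup_apply, Pi.zero_apply] at ha
    have f1 := le_max_left (f x) 0
    have f2 := le_max_right (f x) 0
    obtain ⟨n, hn⟩ := v4 x a (by simp only [Pi.neg_apply]; linarith)
    exact ⟨n, lt_inf_iff.2 ⟨hn, by simp only [Pi.zero_apply]; linarith⟩⟩

theorem HasInt.sup {S : IntegralSystem X} {f g : X → ℝ} {c d : ℝ} (h : HasInt S f c)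
    (h' : HasInt S g d) : ∃ e, HasInt S (f ⊔ g) e := by
  obtain ⟨e, he⟩ := (h.add h'.neg).posPart
  refine ⟨e + d, ?_⟩
  have e1 : f ⊔ g = ((f + -g) ⊔ 0) + g := by
    ext x
    simp only [Pi.sup_apply, Pi.add_apply, Pi.neg_apply, Pi.zero_apply]
    rcases max_cases (f x) (g x) with ⟨e, _⟩ | ⟨e, _⟩ <;>
    rcases max_cases (f x + -g x) 0 with ⟨e', _⟩ | ⟨e', _⟩ <;> rw [e, e'] <;> linarith
  rw [e1]
  exact he.add h'

theorem HasInt.inf {S : IntegralSystem X} {f g : X → ℝ} {c d : ℝ} (h : HasInt S f c)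
    (h' : HasInt S g d) : ∃ e, HasInt S (f ⊓ g) e := by
  obtain ⟨e, he⟩ := h.neg.sup h'.neg
  refine ⟨-e, ?_⟩
  have := he.neg
  rwa [neg_sup, neg_neg, neg_neg] at this

/-- Monotone sequences of integrable functions give upper bounds. -/
theorem key {S : IntegralSystem X} {f : X → EReal} {g : ℕ → X → ℝ} {c : ℕ → ℝ} {C : ℝ}
    (hg : ∀ n, HasInt S (g n) (c n)) (hm : Monotone g) (hc : ∀ n, c n ≤ C)
    (hd : ∀ x (a : ℝ), (a : EReal) < f x → ∃ n, a < g n x) {ε : ℝ} (hε : 0 < ε) :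
    UB S f (C + ε) := by
  obtain ⟨u, u1, u2, u3, u4⟩ := (hg 0 (ε / 2) (by positivity)).1
  have hk : ∀ k, ∃ v : ℕ → X → ℝ, (∀ n, v n ∈ S.L) ∧ Monotone v ∧
      (∀ n, S.I (v n) ≤ c (k + 1) + -c k + ε / 2 * (1 / 2) ^ (k + 1)) ∧
      (∀ x (a : ℝ), a < (g (k + 1) + -g k) x → ∃ n, a < v n x) ∧ ∀ n, 0 ≤ v n := fun k =>
    UR.nonneg_seq (((hg (k + 1)).add (hg k).neg) (ε / 2 * (1 / 2) ^ (k + 1)) (by positivity)).1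
      (fun x => by
        have := hm (Nat.le_succ k) x
        simp only [Pi.add_apply, Pi.neg_apply]
        simp only [Nat.succ_eq_add_one] at this
        linarith)
  choose v v1 v2 v3 v4 v5 using hk
  let P : ℕ → ℕ → X → ℝ := fun N n => u n + ∑ k ∈ Finset.range N, v k n
  have Ps : ∀ N n, P (N + 1) n = P N n + v N n := by
    intro N n
    simp only [P, Finset.sum_range_succ, add_assoc]
  have P0 : ∀ n, P 0 n = u n := fun n => by simp [P]
  have Pm : ∀ N n, P N n ∈ S.L := by
    intro N n
    induction N with
    | zero => rw [P0]; exact u1 n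
    | succ N ih => rw [Ps]; exact S.add_mem ih (v1 N n)
  have PI : ∀ N n, S.I (P N n) ≤ c N + ε - ε / 2 * (1 / 2) ^ N := by
    intro N n
    induction N with
    | zero => rw [P0]; have := u3 n; simp only [pow_zero]; linarith
    | succ N ih =>
      rw [Ps, S.I_add (Pm N n) (v1 N n)]
      have := v3 N n
      rw [pow_succ] at this ⊢
      linarith
  have Pmono : ∀ N, Monotone (P N) := by
    intro N
    induction N with
    | zero => intro m n hmn; rw [P0, P0]; exact u2 hmn
    | succ N ih => intro m n hmn; rw [Ps, Ps]; exact add_le_add (ih hmn) (v2 N hmn)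
  have Pmono' : ∀ n, Monotone (fun N => P N n) := by
    intro n
    refine monotone_nat_of_le_succ (fun N => ?_)
    rw [Ps]
    exact le_add_of_nonneg_right (v5 N n)
  have Pd : ∀ N x (a : ℝ), a < g N x → ∃ n, a < P N n x := by
    intro N
    induction N with
    | zero => intro x a ha; obtain ⟨n, hn⟩ := u4 x a ha; exact ⟨n, by rwa [P0]⟩
    | succ N ih =>
      intro x a ha
      obtain ⟨p, hp⟩ := ih x (g N x - (g (N + 1) x - a) / 2) (by linarith)
      obtain ⟨q, hq⟩ := v4 N x (g (N + 1) x + -g N x - (g (N + 1) x - a) / 2)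
        (by simp only [Pi.add_apply, Pi.neg_apply]; linarith)
      refine ⟨max p q, ?_⟩
      rw [Ps, Pi.add_apply]
      have e1 := Pmono N (le_max_left p q) x
      have e2 := v2 N (le_max_right p q) x
      linarith
  refine ⟨fun n => P n n, fun n => Pm n n,
    fun m n hmn => (Pmono m hmn).trans (Pmono' n hmn), fun n => ?_, fun x a ha => ?_⟩
  · have := PI n n
    have h2 : 0 ≤ ε / 2 * (1 / 2) ^ n := by positivity
    linarith [hc n]
  · obtain ⟨N, hN⟩ := hd x a ha
    obtain ⟨n, hn⟩ := Pd N x a hN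
    refine ⟨max N n, hn.trans_le ?_⟩
    exact ((Pmono N (le_max_right N n)).trans (Pmono' _ (le_max_left N n))) x

theorem upperInt_le {S : IntegralSystem X} {f : X → EReal} {c : ℝ} (h : UB S f c) :
    upperInt S f ≤ c := by
  obtain ⟨g, h1, h2, h3, h4⟩ := h
  have ht : ∀ x, Tendsto (fun n => (g n x : EReal)) atTop (𝓝 (⨆ n, (g n x : EReal))) :=
    fun x => tendsto_atTop_iSup (fun m n hmn => EReal.coe_le_coe_iff.2 (h2 hmn x))
  have hle : upperInt S f ≤ Iup S (fun x => ⨆ n, (g n x : EReal)) := by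
    refine sInf_le ⟨_, ⟨⟨g, h1, fun n x => h2 (Nat.le_succ n) x, ht⟩, fun x => ?_⟩, rfl⟩
    refine EReal.ge_of_forall_gt_iff_ge.1 (fun a ha => ?_)
    obtain ⟨n, hn⟩ := h4 x a ha
    exact (EReal.coe_le_coe_iff.2 hn.le).trans (le_iSup (fun n => (g n x : EReal)) n)
  refine hle.trans (sSup_le ?_)
  rintro d ⟨k, k1, k2, k3, k4⟩
  refine le_of_tendsto' k4 (fun n => EReal.coe_le_coe_iff.2 ?_)
  refine compare S (k1 n) h1 h2 h3 (fun x a ha => ?_)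
  have hkm : Monotone (fun n => (k n x : EReal)) :=
    monotone_nat_of_le_succ (fun n => EReal.coe_le_coe_iff.2 (k2 n x))
  have : (a : EReal) < ⨆ n, (g n x : EReal) :=
    (EReal.coe_lt_coe_iff.2 ha).trans_le (hkm.ge_of_tendsto (k3 x) n)
  obtain ⟨m, hm⟩ := lt_iSup_iff.1 this
  exact ⟨m, EReal.coe_lt_coe_iff.1 hm⟩

theorem UB_of_lt {S : IntegralSystem X} {f : X → EReal} {c : ℝ} (h : upperInt S f < c) :
    UB S f c := by
  obtain ⟨_, ⟨g0, ⟨⟨g, h1, h2, h3⟩, hf⟩, rfl⟩, hlt⟩ := sInf_lt_iff.1 h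
  have hm : Monotone g := monotone_nat_of_le_succ (fun n x => h2 n x)
  refine ⟨g, h1, hm, fun n => ?_, fun x a ha => ?_⟩
  · have hI : Monotone (fun n => (S.I (g n) : EReal)) :=
      fun m n hmn => EReal.coe_le_coe_iff.2 (I_mono S (h1 m) (h1 n) (hm hmn))
    have : (⨆ n, (S.I (g n) : EReal)) ≤ Iup S g0 :=
      le_sSup ⟨g, h1, h2, h3, tendsto_atTop_iSup hI⟩
    have h5 := ((le_iSup (fun n => (S.I (g n) : EReal)) n).trans this).trans hlt.le
    exact EReal.coe_le_coe_iff.1 h5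
  · obtain ⟨n, hn⟩ := ((h3 x).eventually (lt_mem_nhds (ha.trans_le (hf x)))).exists
    exact ⟨n, EReal.coe_lt_coe_iff.1 hn⟩

theorem upperInt_le_upperInt {S T : IntegralSystem X} {f : X → EReal}
    (h : ∀ c : ℝ, UB S f c → ∀ ε > 0, UB T f (c + ε)) : upperInt T f ≤ upperInt S f := by
  refine EReal.le_of_forall_lt_iff_le.1 (fun z hz => ?_)
  obtain ⟨w, hw1, hw2⟩ := EReal.lt_iff_exists_real_btwn.1 hz
  have := upperInt_le (h w (UB_of_lt hw1) (z - w) (sub_pos.2 (EReal.coe_lt_coe_iff.1 hw2)))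
  simpa using this

theorem lowerInt_eq (S : IntegralSystem X) (f : X → EReal) :
    lowerInt S f = - upperInt S (fun x => - f x) := by
  unfold lowerInt upperInt
  apply le_antisymm
  · refine sSup_le ?_
    rintro _ ⟨g, ⟨hg, hgf⟩, rfl⟩
    unfold Idown
    rw [EReal.neg_le_neg_iff]
    exact sInf_le ⟨_, ⟨hg, fun x => EReal.neg_le_neg_iff.2 (hgf x)⟩, rfl⟩
  · rw [EReal.neg_le]
    refine le_sInf ?_
    rintro _ ⟨g, ⟨hg, hgf⟩, rfl⟩
    rw [EReal.neg_le]
    refine le_sSup ⟨fun x => - g x, ⟨?_, fun x => ?_⟩, ?_⟩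
    · simpa [MemLdown] using hg
    · exact EReal.neg_le.1 (hgf x)
    · simp [Idown]

theorem HasInt.upper {S : IntegralSystem X} {f : X → ℝ} {c : ℝ} (h : HasInt S f c) :
    upperInt S (fun x => (f x : EReal)) = c := by
  apply le_antisymm
  · refine EReal.le_of_forall_lt_iff_le.1 (fun z hz => ?_)
    have hz' := EReal.coe_lt_coe_iff.1 hz
    have := upperInt_le ((UB_coe S f _).2 (h (z - c) (by linarith)).1)
    simpa using this
  · refine EReal.le_of_forall_lt_iff_le.1 (fun z hz => ?_)
    exact EReal.coe_le_coe_iff.2 (h.le_of_UR ((UB_coe S f _).1 (UB_of_lt hz)))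

theorem HasInt.lower {S : IntegralSystem X} {f : X → ℝ} {c : ℝ} (h : HasInt S f c) :
    lowerInt S (fun x => (f x : EReal)) = c := by
  have := h.neg.upper
  rw [lowerInt_eq]
  simp only [Pi.neg_apply, EReal.coe_neg] at this
  rw [this, neg_neg]

theorem HasInt.int1 {S : IntegralSystem X} {f : X → ℝ} {c : ℝ} (h : HasInt S f c) :
    Int1 S f = c := by
  rw [Int1, h.upper, EReal.toReal_coe]

theorem integrable1_iff {S : IntegralSystem X} {f : X → ℝ} :
    Integrable1 S f ↔ ∃ c, HasInt S f c := by
  constructor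
  · rintro ⟨c, hl, hu⟩
    refine ⟨c, fun ε hε => ⟨(UB_coe S f _).1 (UB_of_lt ?_), (UB_coe S (-f) _).1 (UB_of_lt ?_)⟩⟩
    · rw [hu]; exact EReal.coe_lt_coe_iff.2 (by linarith)
    · rw [lowerInt_eq, neg_eq_iff_eq_neg] at hl
      simp only [Pi.neg_apply, EReal.coe_neg]
      rw [hl, ← EReal.coe_neg]
      exact EReal.coe_lt_coe_iff.2 (by linarith)
  · rintro ⟨c, h⟩
    exact ⟨c, h.lower, h.upper⟩

theorem hasInt_int1 {S : IntegralSystem X} {f : X → ℝ} (h : Integrable1 S f) :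
    HasInt S f (Int1 S f) := by
  obtain ⟨c, hc⟩ := integrable1_iff.1 h
  rwa [hc.int1]

/-- The Daniell extension as an integral system. -/
noncomputable def ext1 (S : IntegralSystem X) : IntegralSystem X where
  L := { f | Integrable1 S f }
  I := Int1 S
  zero_mem := integrable1_iff.2 ⟨_, HasInt_mem S.zero_mem⟩
  add_mem f g hf hg := integrable1_iff.2 ⟨_, (hasInt_int1 hf).add (hasInt_int1 hg)⟩
  smul_mem r f hf := integrable1_iff.2 ⟨_, (hasInt_int1 hf).smul r⟩
  sup_mem f g hf hg := integrable1_iff.2 ((hasInt_int1 hf).sup (hasInt_int1 hg))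
  inf_mem f g hf hg := integrable1_iff.2 ((hasInt_int1 hf).inf (hasInt_int1 hg))
  I_add f g hf hg := ((hasInt_int1 hf).add (hasInt_int1 hg)).int1
  I_smul r f hf := ((hasInt_int1 hf).smul r).int1
  I_pos f hf h := (hasInt_int1 hf).pos h
  I_cont f hf h0 hm ht := by
    have hF := fun n => hasInt_int1 (hf n)
    have hanti : Antitone f := antitone_nat_of_succ_le (fun n x => hm n x)
    have hIanti : Antitone (fun n => Int1 S (f n)) := by
      intro m n hmn
      have := ((hF m).add (hF n).neg).pos (fun x => by
        have := hanti hmn x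
        simp only [Pi.add_apply, Pi.neg_apply]; linarith)
      simp only
      linarith
    have hpos : ∀ n, 0 ≤ Int1 S (f n) := fun n => (hF n).pos (h0 n)
    rw [Metric.tendsto_atTop]
    intro ε hε
    have hex : ∃ n, Int1 S (f n) < ε := by
      by_contra hcon
      push Not at hcon
      have hk : UB S (fun x => (f 0 x : EReal)) (Int1 S (f 0) - ε + ε / 2) := by
        refine key (g := fun n => f 0 + -f n) (c := fun n => Int1 S (f 0) + -Int1 S (f n))
          (fun n => (hF 0).add (hF n).neg) (fun m n hmn => ?_) (fun n => ?_) (fun x a ha => ?_)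
          (by positivity)
        · exact add_le_add le_rfl (neg_le_neg (hanti hmn))
        · linarith [hcon n]
        · have ha' := EReal.coe_lt_coe_iff.1 ha
          obtain ⟨n, hn⟩ := ((ht x).eventually (gt_mem_nhds (sub_pos.2 ha'))).exists
          refine ⟨n, ?_⟩
          simp only [Pi.add_apply, Pi.neg_apply]
          linarith
      have := (hF 0).le_of_UR ((UB_coe S _ _).1 hk)
      linarith
    obtain ⟨N, hN⟩ := hex
    refine ⟨N, fun n hn => ?_⟩
    rw [Real.dist_eq, sub_zero, abs_of_nonneg (hpos n)]
    exact (hIanti hn).trans_lt hN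

theorem upperInt_ext {S S' : IntegralSystem X} (hL : S'.L = { f | Integrable1 S f })
    (hI : ∀ f : X → ℝ, S'.I f = Int1 S f) (f : X → EReal) : upperInt S' f = upperInt S f := by
  apply le_antisymm
  · refine upperInt_le_upperInt ?_
    rintro c ⟨g, h1, h2, h3, h4⟩ ε hε
    refine ⟨g, fun n => ?_, h2, fun n => ?_, h4⟩
    · rw [hL]; exact integrable1_iff.2 ⟨_, HasInt_mem (h1 n)⟩
    · rw [hI, (HasInt_mem (h1 n)).int1]; linarith [h3 n]
  · refine upperInt_le_upperInt ?_
    rintro c ⟨g, h1, h2, h3, h4⟩ ε hε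
    refine key (c := fun n => S'.I (g n)) (fun n => ?_) h2 h3 h4 hε
    have := h1 n
    rw [hL] at this
    rw [hI]
    exact hasInt_int1 this

end DaniellAux

/-- Maximality of the Daniell extension: `(L¹, I¹)` is again an integral system, its
upper and lower integrals coincide with those of `(L, I)`, and consequently its Daniell
extension is `(L¹, I¹)` itself. -/
theorem daniell_extension_maximal (S : IntegralSystem X) :
    (∃ S' : IntegralSystem X,
      S'.L = { f | Integrable1 S f } ∧ ∀ f : X → ℝ, S'.I f = Int1 S f) ∧
    (∀ S' : IntegralSystem X,
      S'.L = { f | Integrable1 S f } → (∀ f : X → ℝ, S'.I f = Int1 S f) →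
      (∀ f : X → EReal, upperInt S' f = upperInt S f ∧ lowerInt S' f = lowerInt S f) ∧
      (∀ f : X → ℝ, (Integrable1 S' f ↔ Integrable1 S f) ∧ Int1 S' f = Int1 S f)) := by
  refine ⟨⟨DaniellAux.ext1 S, rfl, fun _ => rfl⟩, fun S' hL hI => ?_⟩
  have hu := DaniellAux.upperInt_ext hL hI
  have hl : ∀ f : X → EReal, lowerInt S' f = lowerInt S f := fun f => by
    rw [DaniellAux.lowerInt_eq, DaniellAux.lowerInt_eq, hu]
  refine ⟨fun f => ⟨hu f, hl f⟩, fun f => ⟨?_, ?_⟩⟩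
  · unfold Integrable1
    rw [hu, hl]
  · unfold Int1
    rw [hu]
end
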